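/- Let ℓ > 0. For every x ∈ S one has u_ℓ(x) ≥ 0. Moreover, x ∈ S is weakly Pareto optimal for min_{x∈S} F(x) if and only if u_ℓ(x) = 0. -/

import Mathlib

/-- The regularized merit function
`u_ℓ(x) = max_{y ∈ S} min_i (F i x - F i y - (ℓ/2)‖x - y‖²)` (the maximum is attained under
the standing convexity assumptions, so it coincides with the supremum below). -/
noncomputable def meritU {n m : ℕ} (ℓ : ℝ) (S : Set (EuclideanSpace ℝ (Fin n)))
    (F : Fin m → EuclideanSpace ℝ (Fin n) → ℝ)
    (x : EuclideanSpace ℝ (Fin n)) : ℝ :=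
  sSup ((fun y => ⨅ i, (F i x - F i y - ℓ / 2 * ‖x - y‖ ^ 2)) '' S)

/-!
Dropping the nonnegative regularization shows that a positive value of
`min_i (F i x - F i y - (ℓ/2)‖x - y‖²)` makes `y` dominate `x`. Conversely, if `z` dominates `x`,
move from `x` towards `z` by a small `t > 0`: by convexity every `F i` decreases at least linearly
in `t`, while the regularization costs only `O(t²)`, so the minimum becomes positive.
The supremum over `y` is finite because a convex function on a convex set in finite dimension
decreases at most linearly away from a point of the relative interior, which the quadratic term
absorbs.
-/

open Set Filter Topology AffineMap
open scoped NNReal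

theorem eventually_mul_sq_lt_mul {δ : ℝ} (hδ : 0 < δ) (c : ℝ) :
    ∀ᶠ t : ℝ in 𝓝[>] 0, c * t ^ 2 < t * δ := by
  have tendsto_zero : Tendsto (fun t : ℝ => c * t) (𝓝[>] 0) (𝓝 0) :=
    Tendsto.mono_left (by simpa using (continuous_const_mul c).tendsto 0) nhdsWithin_le_nhds
  filter_upwards [tendsto_zero.eventually_lt_const hδ, self_mem_nhdsWithin] with t hlt ht
  calc c * t ^ 2 = t * (c * t) := by ring
    _ < t * δ := mul_lt_mul_of_pos_left hlt ht

theorem mul_sub_le_sub_lineMap_of_convexOn {E : Type*} [AddCommGroup E] [Module ℝ E]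
    {s : Set E} {f : E → ℝ} {x y : E} {r : ℝ} (hf : ConvexOn ℝ s f) (hx : x ∈ s) (hy : y ∈ s)
    (hr : r ∈ Icc 0 1) : r * (f x - f y) ≤ f x - f (lineMap x y r) := by
  have convexity := hf.2 hx hy (sub_nonneg.2 hr.2) hr.1 (sub_add_cancel 1 r)
  rw [← lineMap_apply_module, smul_eq_mul, smul_eq_mul] at convexity
  linarith

section ConvexMinorant

variable {E : Type*} [NormedAddCommGroup E] [NormedSpace ℝ E] {s t : Set E} {f : E → ℝ} {x y : E}

theorem sub_mul_dist_le_of_convexOn_of_lipschitzOnWith {K : ℝ≥0} (hf : ConvexOn ℝ s f)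
    (ht : t ∈ 𝓝[s] x) (hK : LipschitzOnWith K f t) (hx : x ∈ s) (hy : y ∈ s) :
    f x - K * dist y x ≤ f y := by
  have tendsto_lineMap : Tendsto (lineMap x y) (𝓝[Icc (0 : ℝ) 1] 0) (𝓝[s] x) := by
    have := (lineMap_continuous (R := ℝ) (p := x) (q := y)).continuousWithinAt.tendsto_nhdsWithin
      (s := Icc 0 1) (x := 0) fun r hr => hf.1.lineMap_mem hx hy hr
    rwa [lineMap_apply_zero] at this
  have eventually_mem : ∀ᶠ r : ℝ in 𝓝[>] 0, lineMap x y r ∈ t :=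
    (tendsto_lineMap.eventually_mem ht).filter_mono (nhdsWithin_le_of_mem (Icc_mem_nhdsGT one_pos))
  obtain ⟨r, hrt, hr⟩ := (eventually_mem.and (Ioc_mem_nhdsGT one_pos)).exists
  have scaled : r * (f x - f y) ≤ r * (K * dist y x) := by
    calc r * (f x - f y)
        ≤ f x - f (lineMap x y r) :=
          mul_sub_le_sub_lineMap_of_convexOn hf hx hy (Ioc_subset_Icc_self hr)
      _ ≤ dist (f x) (f (lineMap x y r)) := le_abs_self _
      _ ≤ K * dist x (lineMap x y r) := hK.dist_le_mul _ (mem_of_mem_nhdsWithin hx ht) _ hrt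
      _ = r * (K * dist y x) := by
          rw [dist_left_lineMap, Real.norm_of_nonneg hr.1.le, dist_comm x y]; ring
  linarith [le_of_mul_le_mul_left scaled hr.1]

variable [FiniteDimensional ℝ E]

theorem exists_sub_mul_dist_le_of_mem_interior (hf : ConvexOn ℝ s f) (hx : x ∈ interior s) :
    ∃ K : ℝ≥0, ∀ y ∈ s, f x - K * dist y x ≤ f y := by
  obtain ⟨K, t, ht, hK⟩ := hf.locallyLipschitzOn_interior hx
  rw [isOpen_interior.nhdsWithin_eq hx] at ht
  exact ⟨K, fun y hy => sub_mul_dist_le_of_convexOn_of_lipschitzOnWith hf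
    (mem_nhdsWithin_of_mem_nhds ht) hK (interior_subset hx) hy⟩

theorem exists_sub_mul_dist_le_of_mem_intrinsicInterior (hf : ConvexOn ℝ s f)
    (hx : x ∈ intrinsicInterior ℝ s) : ∃ K : ℝ≥0, ∀ y ∈ s, f x - K * dist y x ≤ f y := by
  obtain ⟨p, hp, rfl⟩ := mem_intrinsicInterior.1 hx
  have : Nonempty (affineSpan ℝ s) := ⟨p⟩
  -- `affineSpan ℝ s` is only a torsor; `e` charts it by its direction, a normed space.
  let e := AffineIsometryEquiv.vaddConst ℝ p
  let φ : (affineSpan ℝ s).direction →ᵃⁱ[ℝ] E :=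
    (affineSpan ℝ s).subtypeₐᵢ.comp e.toAffineIsometry
  have hφ0 : φ 0 = p := by simp [φ, e]
  have zero_mem : 0 ∈ interior (φ ⁻¹' s) := by
    have : 0 ∈ e.toHomeomorph ⁻¹' interior ((↑) ⁻¹' s) := by simpa [e] using hp
    rwa [Homeomorph.preimage_interior] at this
  obtain ⟨K, hK⟩ :=
    exists_sub_mul_dist_le_of_mem_interior (hf.comp_affineMap φ.toAffineMap) zero_mem
  refine ⟨K, fun y hy => ?_⟩
  obtain ⟨v, hv⟩ := e.surjective ⟨y, subset_affineSpan ℝ s hy⟩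
  obtain rfl : φ v = y := congrArg Subtype.val hv
  rw [← hφ0, φ.dist_map]
  exact hK v hy

theorem exists_sub_mul_dist_le_of_convexOn (hf : ConvexOn ℝ s f) (x : E) :
    ∃ (c : ℝ) (K : ℝ≥0), ∀ y ∈ s, c - K * dist x y ≤ f y := by
  rcases s.eq_empty_or_nonempty with rfl | hs
  · simp
  obtain ⟨p, hp⟩ := hs.intrinsicInterior hf.1
  obtain ⟨K, hK⟩ := exists_sub_mul_dist_le_of_mem_intrinsicInterior hf hp
  refine ⟨f p - K * dist x p, K, fun y hy => ?_⟩
  calc f p - K * dist x p - K * dist x y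
      = f p - K * (dist y x + dist x p) := by rw [dist_comm y x]; ring
    _ ≤ f p - K * dist y p := by gcongr; exact dist_triangle y x p
    _ ≤ f y := hK y hy

theorem bddAbove_image_sub_sub_mul_sq_norm_of_convexOn (hf : ConvexOn ℝ s f) (a : ℝ) {c : ℝ}
    (hc : 0 < c) (x : E) : BddAbove ((fun y => a - f y - c * ‖x - y‖ ^ 2) '' s) := by
  obtain ⟨b, K, hK⟩ := exists_sub_mul_dist_le_of_convexOn hf x
  refine ⟨a - b + K ^ 2 / (4 * c), forall_mem_image.2 fun y hy => ?_⟩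
  have complete_square : K * ‖x - y‖ - c * ‖x - y‖ ^ 2 ≤ K ^ 2 / (4 * c) := by
    rw [le_div_iff₀ (by positivity)]
    linarith [sq_nonneg (K - 2 * c * ‖x - y‖)]
  have minorant := hK y hy
  rw [dist_eq_norm] at minorant
  linarith

end ConvexMinorant

section RegularizedMerit

variable {E ι : Type*} [NormedAddCommGroup E]

/-- The objective `min_i (F i x - F i y - (ℓ/2)‖x - y‖²)` whose supremum over `y` is the merit
function; it is meaningful for finite nonempty `ι`, where the infimum is a minimum. -/
noncomputable def regularizedGap (ℓ : ℝ) (F : ι → E → ℝ) (x y : E) : ℝ :=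
  ⨅ i, (F i x - F i y - ℓ / 2 * ‖x - y‖ ^ 2)

/-- The merit function `meritU` for an arbitrary normed space and index type. It is a supremum
rather than a maximum, and takes the junk value `0` if the gap is unbounded above on `S`. -/
noncomputable def regularizedMerit (ℓ : ℝ) (S : Set E) (F : ι → E → ℝ) (x : E) : ℝ :=
  sSup (regularizedGap ℓ F x '' S)

variable {ℓ : ℝ} {S : Set E} {F : ι → E → ℝ} {x y z : E}

theorem regularizedGap_self : regularizedGap ℓ F x x = 0 := by
  simp [regularizedGap]

theorem regularizedGap_le [Finite ι] (i : ι) :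
    regularizedGap ℓ F x y ≤ F i x - F i y - ℓ / 2 * ‖x - y‖ ^ 2 :=
  ciInf_le (finite_range _).bddBelow i

theorem lt_of_regularizedGap_pos [Finite ι] (hℓ : 0 ≤ ℓ) (h : 0 < regularizedGap ℓ F x y) (i : ι) :
    F i y < F i x := by
  have regularization_nonneg : 0 ≤ ℓ / 2 * ‖x - y‖ ^ 2 := by positivity
  linarith [h.trans_le (regularizedGap_le i)]

variable [NormedSpace ℝ E] [Finite ι] [Nonempty ι]

theorem exists_regularizedGap_pos (hF : ∀ i, ConvexOn ℝ S (F i)) (hx : x ∈ S) (hz : z ∈ S)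
    (hzx : ∀ i, F i z < F i x) : ∃ y ∈ S, 0 < regularizedGap ℓ F x y := by
  have unit_mem : ∀ᶠ t : ℝ in 𝓝[>] 0, t ∈ Icc 0 1 := Icc_mem_nhdsGT one_pos
  have small_step : ∀ᶠ t : ℝ in 𝓝[>] 0, ∀ i,
      ℓ / 2 * ‖x - z‖ ^ 2 * t ^ 2 < t * (F i x - F i z) :=
    eventually_all.2 fun i => eventually_mul_sq_lt_mul (sub_pos.2 (hzx i)) _
  obtain ⟨t, ht, hlt⟩ := (unit_mem.and small_step).exists
  refine ⟨lineMap x z t, (hF (Classical.arbitrary ι)).1.lineMap_mem hx hz ht, ?_⟩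
  obtain ⟨i, hi⟩ := exists_eq_ciInf_of_finite
    (f := fun i => F i x - F i (lineMap x z t) - ℓ / 2 * ‖x - lineMap x z t‖ ^ 2)
  have norm_eq : ‖x - lineMap x z t‖ = t * ‖x - z‖ := by
    rw [← dist_eq_norm, dist_left_lineMap, Real.norm_of_nonneg ht.1, dist_eq_norm]
  rw [regularizedGap, ← hi, norm_eq]
  linarith [hlt i, mul_sub_le_sub_lineMap_of_convexOn (hF i) hx hz ht]

theorem exists_regularizedGap_pos_iff (hℓ : 0 ≤ ℓ) (hF : ∀ i, ConvexOn ℝ S (F i)) (hx : x ∈ S) :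
    (∃ y ∈ S, 0 < regularizedGap ℓ F x y) ↔ ∃ z ∈ S, ∀ i, F i z < F i x :=
  ⟨fun ⟨y, hy, hpos⟩ => ⟨y, hy, lt_of_regularizedGap_pos hℓ hpos⟩,
    fun ⟨_, hz, hzx⟩ => exists_regularizedGap_pos hF hx hz hzx⟩

variable [FiniteDimensional ℝ E]

theorem bddAbove_image_regularizedGap (hℓ : 0 < ℓ) (hF : ∀ i, ConvexOn ℝ S (F i)) (x : E) :
    BddAbove (regularizedGap ℓ F x '' S) := by
  let i := Classical.arbitrary ι
  obtain ⟨b, hb⟩ := bddAbove_image_sub_sub_mul_sq_norm_of_convexOn (hF i) (F i x) (half_pos hℓ) x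
  exact ⟨b, forall_mem_image.2 fun y hy =>
    (regularizedGap_le i).trans (hb (mem_image_of_mem _ hy))⟩

theorem regularizedMerit_nonneg (hℓ : 0 < ℓ) (hF : ∀ i, ConvexOn ℝ S (F i)) (hx : x ∈ S) :
    0 ≤ regularizedMerit ℓ S F x :=
  le_csSup (bddAbove_image_regularizedGap hℓ hF x) ⟨x, hx, regularizedGap_self⟩

theorem regularizedMerit_pos_iff (hℓ : 0 < ℓ) (hF : ∀ i, ConvexOn ℝ S (F i)) (hx : x ∈ S) :
    0 < regularizedMerit ℓ S F x ↔ ∃ z ∈ S, ∀ i, F i z < F i x := by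
  rw [← exists_regularizedGap_pos_iff hℓ.le hF hx, regularizedMerit,
    lt_csSup_iff (bddAbove_image_regularizedGap hℓ hF x) ⟨_, mem_image_of_mem _ hx⟩,
    exists_mem_image]

theorem meritU_nonneg_and_zero_iff_weak_pareto_general (hℓ : 0 < ℓ)
    (hF : ∀ i, ConvexOn ℝ S (F i)) :
    (∀ x ∈ S, 0 ≤ regularizedMerit ℓ S F x) ∧
    (∀ x ∈ S, ((¬ ∃ z ∈ S, ∀ i, F i z < F i x) ↔ regularizedMerit ℓ S F x = 0)) := by
  refine ⟨fun x hx => regularizedMerit_nonneg hℓ hF hx, fun x hx => ?_⟩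
  rw [← regularizedMerit_pos_iff hℓ hF hx, not_lt]
  exact (regularizedMerit_nonneg hℓ hF hx).ge_iff_eq'

end RegularizedMerit

/-- `u_ℓ ≥ 0` on `S`, and `x ∈ S` is weakly Pareto optimal iff `u_ℓ x = 0`. -/
theorem meritU_nonneg_and_zero_iff_weak_pareto {n m : ℕ} (hm : 0 < m)
    (S : Set (EuclideanSpace ℝ (Fin n))) (hS : S.Nonempty)
    (hSclosed : IsClosed S) (hSconv : Convex ℝ S)
    (F : Fin m → EuclideanSpace ℝ (Fin n) → ℝ)
    (hFconv : ∀ i, ConvexOn ℝ Set.univ (F i))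
    (ℓ : ℝ) (hℓ : 0 < ℓ) :
    (∀ x ∈ S, 0 ≤ meritU ℓ S F x) ∧
    (∀ x ∈ S, ((¬ ∃ z ∈ S, ∀ i, F i z < F i x) ↔ meritU ℓ S F x = 0)) := by
  have : Nonempty (Fin m) := ⟨⟨0, hm⟩⟩
  exact meritU_nonneg_and_zero_iff_weak_pareto_general hℓ
    fun i => (hFconv i).subset (subset_univ S) hSconv
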